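/- arXiv:1307.2152 — 6 statements merged into one kernel-verified Lean document; each statement's English description precedes it below -/
import Mathlib

section
/- Let α : I₁ → ℂ and ω : I₂ → ℂ be regular C¹ curves (α' and ω' never vanish) and Φ = α∗ω. Then for (t,s) ∈ I₁×I₂, the vectors Φ_t(t,s) and Φ_s(t,s) are linearly independent over ℝ in ℂ² ≅ ℝ⁴ if and only if (α(t), ω(s)) ≠ (0,0); in particular, if α and ω avoid the origin then Φ is an immersion, and (t*,s*) is a singular point of Φ if and only if α(t*) = 0 = ω(s*). -/
open Complex

/-- The Lagrangian immersion `Φ = α ∗ ω` constructed from two planar curves. -/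
noncomputable def starProd (α ω : ℝ → ℂ) (t₀ s₀ t s : ℝ) : ℂ × ℂ :=
  ((∫ y in s₀..s, deriv ω y * (starRingEnd ℂ) (ω y)) -
    (∫ x in t₀..t, deriv α x * (starRingEnd ℂ) (α x)), α t * ω s)

/-- The partial derivative `Φ_t`. -/
noncomputable def PhiT (α ω : ℝ → ℂ) (t₀ s₀ t s : ℝ) : ℂ × ℂ :=
  deriv (fun x => starProd α ω t₀ s₀ x s) t

/-- The partial derivative `Φ_s`. -/
noncomputable def PhiS (α ω : ℝ → ℂ) (t₀ s₀ t s : ℝ) : ℂ × ℂ :=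
  deriv (fun y => starProd α ω t₀ s₀ t y) s

/-!
The partial derivatives are `Φ_t = α' • (-conj α, ω)` and `Φ_s = ω' • (conj ω, α)`. The vectors
`(-conj α, ω)` and `(conj ω, α)` have determinant `-(|α|² + |ω|²)`, so unless `α = ω = 0` the
partial derivatives are independent even over `ℂ`, while at `α = ω = 0` they both vanish.
-/

section LinearAlgebra

variable {R : Type*} [CommRing R]

lemma mul_conj_add_mul_conj_eq_zero_iff [NoZeroDivisors R] [PartialOrder R] [StarRing R]
    [StarOrderedRing R] {a w : R} :
    a * starRingEnd R a + w * starRingEnd R w = 0 ↔ a = 0 ∧ w = 0 := by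
  simp only [starRingEnd_apply,
    add_eq_zero_iff_of_nonneg (mul_star_self_nonneg a) (mul_star_self_nonneg w),
    mul_eq_zero, star_eq_zero, or_self]

variable [IsDomain R]

lemma linearIndependent_pair_prodMk_iff {a b c d : R} :
    LinearIndependent R ![(a, b), (c, d)] ↔ a * d ≠ b * c := by
  have standard_basis : LinearIndependent R ![((1 : R), (0 : R)), (0, 1)] := by
    simp [LinearIndependent.pair_iff]
  simpa [standard_basis] using
    LinearIndependent.pair_add_smul_add_smul_iff (R := R) (x := ((1 : R), (0 : R))) (y := (0, 1))
      (a := a) (b := b) (c := c) (d := d)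

lemma linearIndependent_neg_conj_pair_iff [PartialOrder R] [StarRing R] [StarOrderedRing R]
    {a w : R} :
    LinearIndependent R ![(-starRingEnd R a, w), (starRingEnd R w, a)] ↔ ¬(a = 0 ∧ w = 0) := by
  rw [linearIndependent_pair_prodMk_iff, ← mul_conj_add_mul_conj_eq_zero_iff, ne_eq, not_iff_not]
  constructor <;> intro h <;> linear_combination -h

end LinearAlgebra

open scoped ComplexOrder in
lemma linearIndependent_real_smul_neg_conj_pair_iff {K : Type*} [RCLike K] {a w u v : K}
    (hu : u ≠ 0) (hv : v ≠ 0) :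
    LinearIndependent ℝ ![u • (-starRingEnd K a, w), v • (starRingEnd K w, a)] ↔
      ¬(a = 0 ∧ w = 0) := by
  constructor
  · rintro independent ⟨rfl, rfl⟩
    exact independent.ne_zero 0 (by simp)
  · intro not_both_zero
    have independent : LinearIndependent K ![u • (-starRingEnd K a, w), v • (starRingEnd K w, a)] :=
      (LinearIndependent.pair_smul_smul_iff hu.isUnit hv.isUnit).2
        (linearIndependent_neg_conj_pair_iff.2 not_both_zero)
    exact independent.restrict_scalars' ℝ

section Calculus

variable {I : Set ℝ} {x₀ x : ℝ}

lemma hasDerivAt_integral_of_continuousOn {E : Type*} [NormedAddCommGroup E] [NormedSpace ℝ E]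
    [CompleteSpace E] {g : ℝ → E} (hI : IsOpen I) (hIc : I.OrdConnected) (hg : ContinuousOn g I)
    (hx₀ : x₀ ∈ I) (hx : x ∈ I) : HasDerivAt (fun z => ∫ y in x₀..z, g y) (g x) x :=
  intervalIntegral.integral_hasDerivAt_right
    (hg.mono (hIc.uIcc_subset hx₀ hx)).intervalIntegrable
    (hg.stronglyMeasurableAtFilter hI x hx) (hg.continuousAt (hI.mem_nhds hx))

lemma hasDerivAt_integral_deriv_mul_conj {K : Type*} [RCLike K] {f : ℝ → K} (hI : IsOpen I)
    (hIc : I.OrdConnected) (hf : ContDiffOn ℝ 1 f I) (hx₀ : x₀ ∈ I) (hx : x ∈ I) :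
    HasDerivAt (fun z => ∫ y in x₀..z, deriv f y * starRingEnd K (f y))
      (deriv f x * starRingEnd K (f x)) x :=
  hasDerivAt_integral_of_continuousOn hI hIc
    ((hf.continuousOn_deriv_of_isOpen hI le_rfl).mul
      (RCLike.continuous_conj.comp_continuousOn hf.continuousOn)) hx₀ hx

end Calculus

section PartialDerivatives

variable {α ω : ℝ → ℂ} {I : Set ℝ} {t₀ s₀ t s : ℝ}

lemma PhiT_eq_smul (hI : IsOpen I) (hIc : I.OrdConnected) (hα : ContDiffOn ℝ 1 α I)
    (ht₀ : t₀ ∈ I) (ht : t ∈ I) :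
    PhiT α ω t₀ s₀ t s = deriv α t • (-starRingEnd ℂ (α t), ω s) := by
  have first := (hasDerivAt_integral_deriv_mul_conj hI hIc hα ht₀ ht).const_sub
    (∫ y in s₀..s, deriv ω y * starRingEnd ℂ (ω y))
  have second := ((hα.differentiableOn one_ne_zero).hasDerivAt (hI.mem_nhds ht)).mul_const (ω s)
  simp only [Prod.smul_mk, smul_eq_mul, mul_neg]
  exact (first.prodMk second).deriv

lemma PhiS_eq_smul (hI : IsOpen I) (hIc : I.OrdConnected) (hω : ContDiffOn ℝ 1 ω I)
    (hs₀ : s₀ ∈ I) (hs : s ∈ I) :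
    PhiS α ω t₀ s₀ t s = deriv ω s • (starRingEnd ℂ (ω s), α t) := by
  have first := (hasDerivAt_integral_deriv_mul_conj hI hIc hω hs₀ hs).sub_const
    (∫ x in t₀..t, deriv α x * starRingEnd ℂ (α x))
  have second := ((hω.differentiableOn one_ne_zero).hasDerivAt (hI.mem_nhds hs)).const_mul (α t)
  simp only [Prod.smul_mk, smul_eq_mul, mul_comm (deriv ω s) (α t)]
  exact (first.prodMk second).deriv

end PartialDerivatives

/-- for regular generating curves, `Φ_t(t,s)` and `Φ_s(t,s)` are linearly
independent over `ℝ` in `ℂ² ≅ ℝ⁴` iff `(α(t), ω(s)) ≠ (0,0)`; in particular `Φ` is an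
immersion when `α` and `ω` avoid the origin, and `(t*,s*)` is a singular point of `Φ`
iff `α(t*) = 0 = ω(s*)`. -/
theorem statement2 (α ω : ℝ → ℂ) (I₁ I₂ : Set ℝ)
    (hI₁o : IsOpen I₁) (hI₁c : I₁.OrdConnected)
    (hI₂o : IsOpen I₂) (hI₂c : I₂.OrdConnected)
    (hα : ContDiffOn ℝ 1 α I₁) (hω : ContDiffOn ℝ 1 ω I₂)
    (hαr : ∀ t ∈ I₁, deriv α t ≠ 0) (hωr : ∀ s ∈ I₂, deriv ω s ≠ 0)
    (t₀ : ℝ) (ht₀ : t₀ ∈ I₁) (s₀ : ℝ) (hs₀ : s₀ ∈ I₂) :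
    ∀ t ∈ I₁, ∀ s ∈ I₂,
      LinearIndependent ℝ ![PhiT α ω t₀ s₀ t s, PhiS α ω t₀ s₀ t s] ↔
        ¬(α t = 0 ∧ ω s = 0) := by
  intro t ht s hs
  rw [PhiT_eq_smul hI₁o hI₁c hα ht₀ ht, PhiS_eq_smul hI₂o hI₂c hω hs₀ hs]
  exact linearIndependent_real_smul_neg_conj_pair_iff (hαr t ht) (hωr s hs)
end

section
/- Let a, b ∈ ℝ, α(t) = t + i·a, ω(s) = s + i·b, base points t₀ = s₀ = 0, and Φ = α∗ω. Define φ : ℂ² → ℂ² by φ(z₁, z₂) = (Im z₁ + i·Im z₂, Re z₁ − i·Re z₂). Then for all (t,s) ∈ ℝ², writing w = t + i·s, one has (φ∘Φ)(t,s) = ( (a + i·b)·w, −w²/2 + i·a·b ). In particular, if (a,b) ≠ (0,0), then φ∘Φ parametrizes (up to translation) the holomorphic graph z ↦ (z, c·z²) with c = −(a − i b)²/(2(a² + b²)²). -/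
open Complex

/-- The real-linear map `φ(z₁,z₂) = (Im z₁ + i·Im z₂, Re z₁ − i·Re z₂)` of `ℂ²`. -/
noncomputable def phiMap (z : ℂ × ℂ) : ℂ × ℂ :=
  ((z.1.im : ℂ) + (z.2.im : ℂ) * Complex.I, (z.1.re : ℂ) - (z.2.re : ℂ) * Complex.I)

theorem deriv_ofReal_add_const (p : ℂ) (x : ℝ) : deriv (fun y : ℝ => (y : ℂ) + p) x = 1 :=
  ((hasDerivAt_id x).ofReal_comp.add_const p).deriv

theorem integral_deriv_mul_conj_ofReal_add_const (p : ℂ) (x₀ x : ℝ) :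
    ∫ y in x₀..x, deriv (fun y : ℝ => (y : ℂ) + p) y * (starRingEnd ℂ) ((y : ℂ) + p) =
      ((x : ℂ) ^ 2 - (x₀ : ℂ) ^ 2) / 2 + ((x : ℂ) - x₀) * (starRingEnd ℂ) p := by
  have integrand_eq (y : ℝ) :
      deriv (fun y : ℝ => (y : ℂ) + p) y * (starRingEnd ℂ) ((y : ℂ) + p) =
        (y : ℂ) + (starRingEnd ℂ) p := by
    rw [deriv_ofReal_add_const, one_mul, map_add, conj_ofReal]
  simp_rw [integrand_eq]
  rw [intervalIntegral.integral_add
      (continuous_ofReal.intervalIntegrable x₀ x) intervalIntegrable_const,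
    intervalIntegral.integral_ofReal, integral_id, intervalIntegral.integral_const, real_smul]
  norm_cast

theorem starProd_ofReal_add_const (p q : ℂ) (t₀ s₀ t s : ℝ) :
    starProd (fun x : ℝ => (x : ℂ) + p) (fun y : ℝ => (y : ℂ) + q) t₀ s₀ t s =
      (((s : ℂ) ^ 2 - (s₀ : ℂ) ^ 2) / 2 + ((s : ℂ) - s₀) * (starRingEnd ℂ) q -
          (((t : ℂ) ^ 2 - (t₀ : ℂ) ^ 2) / 2 + ((t : ℂ) - t₀) * (starRingEnd ℂ) p),
        ((t : ℂ) + p) * ((s : ℂ) + q)) := by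
  rw [starProd, integral_deriv_mul_conj_ofReal_add_const,
    integral_deriv_mul_conj_ofReal_add_const]

theorem phiMap_add_mul_I (x y u v : ℝ) :
    phiMap ((x : ℂ) + y * I, (u : ℂ) + v * I) = ((y : ℂ) + v * I, (x : ℂ) - u * I) := by
  simp [phiMap]

theorem starProd_horizontal_lines (a b t s : ℝ) :
    starProd (fun x : ℝ => (x : ℂ) + a * I) (fun y : ℝ => (y : ℂ) + b * I) 0 0 t s =
      ((((s ^ 2 - t ^ 2) / 2 : ℝ) : ℂ) + ((a * t - b * s : ℝ) : ℂ) * I,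
        ((t * s - a * b : ℝ) : ℂ) + ((a * s + b * t : ℝ) : ℂ) * I) := by
  rw [starProd_ofReal_add_const]
  ext1
  · simp only [map_mul, conj_ofReal, conj_I]
    push_cast
    ring
  · push_cast
    linear_combination (a * b : ℂ) * I_sq

theorem phiMap_starProd_horizontal_lines (a b t s : ℝ) :
    phiMap (starProd (fun x : ℝ => (x : ℂ) + a * I) (fun y : ℝ => (y : ℂ) + b * I) 0 0 t s) =
      (((a : ℂ) + b * I) * ((t : ℂ) + s * I),
        -((t : ℂ) + s * I) ^ 2 / 2 + ((a * b : ℝ) : ℂ) * I) := by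
  rw [starProd_horizontal_lines, phiMap_add_mul_I]
  ext1
  · push_cast
    linear_combination -(b * s : ℂ) * I_sq
  · push_cast
    linear_combination (s ^ 2 / 2 : ℂ) * I_sq

/- For `v = conj u` the product `v * u` is `|u|²`, so the coefficient is `-1 / (2 u²)`. -/
theorem neg_sq_div_mul_sq_eq_neg_sq_div_two {K : Type*} [Field K] {u v : K} (huv : v * u ≠ 0)
    (w : K) : -v ^ 2 / (2 * (v * u) ^ 2) * (u * w) ^ 2 = -w ^ 2 / 2 := by
  calc
    -v ^ 2 / (2 * (v * u) ^ 2) * (u * w) ^ 2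
      = -w ^ 2 * (v * u) ^ 2 / (2 * (v * u) ^ 2) := by ring
    _ = -w ^ 2 / 2 := mul_div_mul_right _ _ (pow_ne_zero 2 huv)

theorem sub_mul_I_mul_add_mul_I (x y : ℂ) : (x - y * I) * (x + y * I) = x ^ 2 + y ^ 2 := by
  linear_combination -y ^ 2 * I_sq

theorem ofReal_sq_add_sq_ne_zero {a b : ℝ} (hab : ¬(a = 0 ∧ b = 0)) :
    (a : ℂ) ^ 2 + (b : ℂ) ^ 2 ≠ 0 := by
  contrapose! hab
  have : a ^ 2 + b ^ 2 = 0 := by exact_mod_cast hab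
  simpa [add_eq_zero_iff_of_nonneg (sq_nonneg a) (sq_nonneg b)] using this

/-- with `α(t) = t + ia`, `ω(s) = s + ib` and `w = t + is`, one has
`(φ∘Φ)(t,s) = ((a+ib)w, −w²/2 + iab)`; in particular, for `(a,b) ≠ (0,0)`, `φ∘Φ`
parametrizes (up to translation) the holomorphic graph `z ↦ (z, cz²)` with
`c = −(a−ib)²/(2(a²+b²)²)`. -/
theorem statement7 (a b : ℝ) :
    (∀ t s : ℝ,
      phiMap (starProd (fun x : ℝ => (x : ℂ) + (a : ℂ) * Complex.I)
          (fun y : ℝ => (y : ℂ) + (b : ℂ) * Complex.I) 0 0 t s)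
        = (((a : ℂ) + (b : ℂ) * Complex.I) * ((t : ℂ) + (s : ℂ) * Complex.I),
            -((t : ℂ) + (s : ℂ) * Complex.I) ^ 2 / 2 + ((a * b : ℝ) : ℂ) * Complex.I)) ∧
    (¬(a = 0 ∧ b = 0) → ∀ t s : ℝ,
      phiMap (starProd (fun x : ℝ => (x : ℂ) + (a : ℂ) * Complex.I)
          (fun y : ℝ => (y : ℂ) + (b : ℂ) * Complex.I) 0 0 t s)
        = (((a : ℂ) + (b : ℂ) * Complex.I) * ((t : ℂ) + (s : ℂ) * Complex.I),
            (-(((a : ℂ) - (b : ℂ) * Complex.I) ^ 2) /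
                (2 * (((a : ℂ) ^ 2 + (b : ℂ) ^ 2) ^ 2))) *
              (((a : ℂ) + (b : ℂ) * Complex.I) * ((t : ℂ) + (s : ℂ) * Complex.I)) ^ 2 +
              ((a * b : ℝ) : ℂ) * Complex.I)) := by
  refine ⟨phiMap_starProd_horizontal_lines a b, fun hab t s => ?_⟩
  have conj_mul_self := sub_mul_I_mul_add_mul_I (a : ℂ) b
  have conj_mul_self_ne_zero : ((a : ℂ) - b * I) * (a + b * I) ≠ 0 :=
    conj_mul_self ▸ ofReal_sq_add_sq_ne_zero hab
  rw [phiMap_starProd_horizontal_lines, ← conj_mul_self,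
    neg_sq_div_mul_sq_eq_neg_sq_div_two conj_mul_self_ne_zero]
end

section
/- Let R > 0, a₁, a₂ ∈ ℝ, α(t) = a₁ + e^{it}, ω(s) = a₂ + R·e^{is/R}, base points t₀ = s₀ = 0. Then Φ = α∗ω is given for all (t,s) ∈ ℝ² by Φ(t,s) = ( a₂·R·e^{is/R} − a₁·e^{it} + i(R·s − t) + (a₁ − a₂·R), a₁·R·e^{is/R} + a₂·e^{it} + R·e^{i(t + s/R)} + a₁·a₂ ); i.e., up to a translation in ℂ², Φ(t,s) = ( a₂ R e^{is/R} − a₁ e^{it} + i(Rs − t), a₁ R e^{is/R} + a₂ e^{it} + R e^{i(t+s/R)} ). (These are Hamiltonian stationary Lagrangian surfaces: both κ_α and κ_ω are constant.) -/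
open Complex

/-!
On a circle `γ x = c + r * exp (i k x)` the relation `(γ - c) * conj (γ - c) = r ^ 2` turns the
integrand `γ' * conj γ` into `conj c * γ' + i k r ^ 2`, so its primitive is
`conj c * γ x + i k r ^ 2 x`.
-/

open scoped ComplexConjugate

section CircleMap

theorem circleMap_zero_mul_conj (r θ : ℝ) :
    circleMap 0 r θ * conj (circleMap 0 r θ) = (r : ℂ) ^ 2 := by
  rw [mul_conj', norm_circleMap_zero, ← ofReal_pow, sq_abs, ofReal_pow]

theorem circleMap_mul_circleMap (c₁ c₂ : ℂ) (r₁ r₂ θ₁ θ₂ : ℝ) :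
    circleMap c₁ r₁ θ₁ * circleMap c₂ r₂ θ₂ =
      c₁ * circleMap 0 r₂ θ₂ + c₂ * circleMap 0 r₁ θ₁ +
        circleMap 0 (r₁ * r₂) (θ₁ + θ₂) + c₁ * c₂ := by
  rw [← circleMap_zero_mul, ← circleMap_sub_center c₁ r₁, ← circleMap_sub_center c₂ r₂]
  ring

variable (c : ℂ) (r k : ℝ)

theorem contDiff_circleMap_const_mul {n : WithTop ℕ∞} :
    ContDiff ℝ n fun x ↦ circleMap c r (k * x) :=
  (contDiff_circleMap c r).comp (contDiff_const.mul contDiff_id)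

theorem deriv_circleMap_const_mul (x : ℝ) :
    deriv (fun x ↦ circleMap c r (k * x)) x = k * (circleMap 0 r (k * x) * I) := by
  rw [deriv_comp_mul_left, deriv_circleMap, real_smul]

theorem deriv_circleMap_const_mul_mul_conj (x : ℝ) :
    deriv (fun x ↦ circleMap c r (k * x)) x * conj (circleMap c r (k * x)) =
      conj c * deriv (fun x ↦ circleMap c r (k * x)) x + r ^ 2 * k * I := by
  have conj_eq : conj (circleMap c r (k * x)) = conj c + conj (circleMap 0 r (k * x)) := by
    rw [← map_add, circleMap_zero, circleMap]
  rw [deriv_circleMap_const_mul, conj_eq]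
  linear_combination k * I * circleMap_zero_mul_conj r (k * x)

theorem integral_deriv_circleMap_const_mul_mul_conj (a b : ℝ) :
    ∫ x in a..b, deriv (fun x ↦ circleMap c r (k * x)) x * conj (circleMap c r (k * x)) =
      conj c * (circleMap 0 r (k * b) - circleMap 0 r (k * a)) + r ^ 2 * k * (b - a) * I := by
  have smooth : ContDiff ℝ 1 fun x ↦ circleMap c r (k * x) := contDiff_circleMap_const_mul c r k
  have integrable_deriv : IntervalIntegrable (deriv fun x ↦ circleMap c r (k * x))
      MeasureTheory.volume a b :=
    (smooth.continuous_deriv le_rfl).intervalIntegrable a b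
  have integral_deriv : ∫ x in a..b, deriv (fun x ↦ circleMap c r (k * x)) x =
      circleMap 0 r (k * b) - circleMap 0 r (k * a) := by
    rw [intervalIntegral.integral_deriv_eq_sub
        (fun x _ ↦ smooth.differentiable one_ne_zero x) integrable_deriv,
      ← circleMap_sub_center c, ← circleMap_sub_center c, sub_sub_sub_cancel_right]
  simp_rw [deriv_circleMap_const_mul_mul_conj]
  rw [intervalIntegral.integral_add (integrable_deriv.const_mul _) intervalIntegrable_const,
    intervalIntegral.integral_const_mul, integral_deriv,
    intervalIntegral.integral_const, real_smul, ofReal_sub]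
  ring

end CircleMap

theorem statement12_general (c₁ c₂ : ℂ) (r₁ r₂ k₁ k₂ t₀ s₀ t s : ℝ) :
    starProd (fun x ↦ circleMap c₁ r₁ (k₁ * x)) (fun y ↦ circleMap c₂ r₂ (k₂ * y)) t₀ s₀ t s =
      (conj c₂ * circleMap 0 r₂ (k₂ * s) - conj c₁ * circleMap 0 r₁ (k₁ * t) +
          (r₂ ^ 2 * k₂ * (s - s₀) - r₁ ^ 2 * k₁ * (t - t₀)) * I +
          (conj c₁ * circleMap 0 r₁ (k₁ * t₀) - conj c₂ * circleMap 0 r₂ (k₂ * s₀)),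
        c₁ * circleMap 0 r₂ (k₂ * s) + c₂ * circleMap 0 r₁ (k₁ * t) +
          circleMap 0 (r₁ * r₂) (k₁ * t + k₂ * s) + c₁ * c₂) := by
  refine Prod.ext ?_ (circleMap_mul_circleMap ..)
  simp only [starProd, integral_deriv_circleMap_const_mul_mul_conj]
  ring

/-- for `α(t) = a₁ + e^{it}` and `ω(s) = a₂ + R e^{is/R}` (base points
`t₀ = s₀ = 0`), the Hamiltonian stationary Lagrangian `Φ = α ∗ ω` is given by
`Φ(t,s) = (a₂Re^{is/R} − a₁e^{it} + i(Rs − t) + (a₁ − a₂R),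
           a₁Re^{is/R} + a₂e^{it} + Re^{i(t+s/R)} + a₁a₂)`. -/
theorem statement12 (R a₁ a₂ : ℝ) (hR : 0 < R) :
    ∀ t s : ℝ,
      starProd (fun x : ℝ => (a₁ : ℂ) + Complex.exp ((x : ℂ) * Complex.I))
          (fun y : ℝ => (a₂ : ℂ) + (R : ℂ) * Complex.exp (((y / R : ℝ) : ℂ) * Complex.I))
          0 0 t s
        = ((a₂ : ℂ) * (R : ℂ) * Complex.exp (((s / R : ℝ) : ℂ) * Complex.I) -
              (a₁ : ℂ) * Complex.exp ((t : ℂ) * Complex.I) +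
              (((R * s : ℝ) : ℂ) - (t : ℂ)) * Complex.I + ((a₁ : ℂ) - (a₂ : ℂ) * (R : ℂ)),
            (a₁ : ℂ) * (R : ℂ) * Complex.exp (((s / R : ℝ) : ℂ) * Complex.I) +
              (a₂ : ℂ) * Complex.exp ((t : ℂ) * Complex.I) +
              (R : ℂ) * Complex.exp (((t : ℂ) + ((s / R : ℝ) : ℂ)) * Complex.I) +
              (a₁ : ℂ) * (a₂ : ℂ)) := by
  have hR_sq : (R : ℂ) ^ 2 * (R : ℂ)⁻¹ = R := by
    rw [sq, mul_assoc, mul_inv_cancel₀ (ofReal_ne_zero.2 hR.ne'), mul_one]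
  intro t s
  simpa [circleMap, div_eq_inv_mul, hR_sq, ← mul_assoc] using
    statement12_general a₁ a₂ 1 R 1 R⁻¹ 0 0 t s
end

section
/- Let ρ > 0, λ ∈ ℝ, and let r : I → ℝ be a C² function on an interval I with r(t) > 0, r'(t)² < 1 and ρ²·r(t)² ≥ λ for all t ∈ I. Suppose r satisfies 1 − r'(t)² − r(t)·r''(t) = r(t)·√( (ρ²r(t)² − λ)(1 − r'(t)²) ) on I. Then r satisfies the squared equation (1 − r'² − r·r'')² = (ρ²r² − λ)·r²·(1 − r'²) on I, and there exists a constant μ ∈ ℝ such that (ρ²·r(t)² − λ)^{3/2}/ρ² + μ = 3·r(t)·√(1 − r'(t)²) for all t ∈ I; i.e. this expression is a first integral of the ODE. -/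
/-!
Let `r = |α|` be the modulus of a unit-speed planar curve `α` with curvature `κ`. Its support
function is `p = r √(1 - r'²)`, and differentiating `|α|²` twice gives `1 - r'² - r r'' = κ p`.
Consequently `p' = r' (1 - r'² - r r'') / √(1 - r'²) = κ r r'`, so when `κ = k(r)` depends on the
modulus alone, `p` differs by a constant from `F(r)`, where `F` is a primitive of `x k(x)`.
For `k(x) = √(ρ² x² - λ)` such a primitive is `(ρ² x² - λ)^{3/2} / (3 ρ²)`.
-/

theorem exists_add_const_eq_of_hasDerivWithinAt {E : Type*} [NormedAddCommGroup E]
    [NormedSpace ℝ E] {s : Set ℝ} (hs : Convex ℝ s) {f g f' : ℝ → E}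
    (hf : ∀ t ∈ s, HasDerivWithinAt f (f' t) s t)
    (hg : ∀ t ∈ s, HasDerivWithinAt g (f' t) s t) :
    ∃ c : E, ∀ t ∈ s, f t + c = g t := by
  rcases s.eq_empty_or_nonempty with rfl | ⟨a, ha⟩
  · exact ⟨0, fun t ht => ht.elim⟩
  refine ⟨g a - f a, fun t ht => ?_⟩
  have hderiv : ∀ x ∈ s, HasDerivWithinAt (g - f) 0 s x := fun x hx => by
    simpa only [sub_self] using (hg x hx).sub (hf x hx)
  have hconst : ‖(g - f) t - (g - f) a‖ ≤ 0 * ‖t - a‖ :=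
    hs.norm_image_sub_le_of_norm_hasDerivWithin_le hderiv (fun _ _ => norm_zero.le) ha ht
  rw [zero_mul, norm_le_zero_iff, sub_eq_zero, Pi.sub_apply, Pi.sub_apply] at hconst
  rw [← hconst, add_sub_cancel]

theorem hasDerivWithinAt_mul_sqrt_one_sub_sq {r r' : ℝ → ℝ} {r'' t : ℝ} {s : Set ℝ}
    (hr : HasDerivWithinAt r (r' t) s t) (hr' : HasDerivWithinAt r' r'' s t)
    (hlt : r' t ^ 2 < 1) :
    HasDerivWithinAt (fun x => r x * √(1 - r' x ^ 2))
      (r' t * (1 - r' t ^ 2 - r t * r'') / √(1 - r' t ^ 2)) s t := by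
  have hpos : 0 < 1 - r' t ^ 2 := sub_pos.2 hlt
  have hsq : √(1 - r' t ^ 2) ^ 2 = 1 - r' t ^ 2 := Real.sq_sqrt hpos.le
  refine (hr.mul (((hr'.fun_pow 2).const_sub 1).sqrt hpos.ne')).congr_deriv ?_
  field_simp
  linear_combination 2 * r' t * hsq

theorem exists_add_const_eq_mul_sqrt_one_sub_sq {s : Set ℝ} (hs : Convex ℝ s)
    {r r' r'' κ F : ℝ → ℝ}
    (hr : ∀ t ∈ s, HasDerivWithinAt r (r' t) s t)
    (hr' : ∀ t ∈ s, HasDerivWithinAt r' (r'' t) s t)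
    (hlt : ∀ t ∈ s, r' t ^ 2 < 1)
    (hκ : ∀ t ∈ s, 1 - r' t ^ 2 - r t * r'' t = κ t * (r t * √(1 - r' t ^ 2)))
    (hF : ∀ t ∈ s, HasDerivAt F (r t * κ t) (r t)) :
    ∃ c : ℝ, ∀ t ∈ s, F (r t) + c = r t * √(1 - r' t ^ 2) := by
  refine exists_add_const_eq_of_hasDerivWithinAt hs
    (fun t ht => (hF t ht).comp_hasDerivWithinAt t (hr t ht)) fun t ht => ?_
  have hsqrt_ne : √(1 - r' t ^ 2) ≠ 0 := (Real.sqrt_pos.2 (sub_pos.2 (hlt t ht))).ne'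
  refine (hasDerivWithinAt_mul_sqrt_one_sub_sq (hr t ht) (hr' t ht) (hlt t ht)).congr_deriv ?_
  rw [hκ t ht]
  field_simp

theorem hasDerivAt_rpow_three_halves_div {ρ : ℝ} (hρ : ρ ≠ 0) (lam x : ℝ) :
    HasDerivAt (fun y => (ρ ^ 2 * y ^ 2 - lam) ^ ((3 : ℝ) / 2) / (3 * ρ ^ 2))
      (x * √(ρ ^ 2 * x ^ 2 - lam)) x := by
  have hquad : HasDerivAt (fun y => ρ ^ 2 * y ^ 2 - lam) (ρ ^ 2 * (2 * x)) x := by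
    simpa using ((hasDerivAt_pow 2 x).const_mul (ρ ^ 2)).sub_const lam
  have hexp : (3 : ℝ) / 2 - 1 = 1 / 2 := by norm_num
  refine ((hquad.rpow_const (.inr (by norm_num))).div_const (3 * ρ ^ 2)).congr_deriv ?_
  rw [hexp, ← Real.sqrt_eq_rpow]
  field_simp

/-- Derivatives are taken within `I`, hence are one-sided at endpoints that belong to `I`. On an
interval where `r < 0`, passing to `-r` turns the equation into its other square-root branch. -/
theorem statement14_general {ρ lam : ℝ} (hρ : ρ ≠ 0) {I : Set ℝ} (hI : I.OrdConnected)
    {r r' r'' : ℝ → ℝ}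
    (hr' : ∀ t ∈ I, HasDerivWithinAt r (r' t) I t)
    (hr'' : ∀ t ∈ I, HasDerivWithinAt r' (r'' t) I t)
    (hlt : ∀ t ∈ I, r' t ^ 2 < 1)
    (hge : ∀ t ∈ I, lam ≤ ρ ^ 2 * r t ^ 2)
    (hode : ∀ t ∈ I,
      1 - r' t ^ 2 - r t * r'' t = r t * √((ρ ^ 2 * r t ^ 2 - lam) * (1 - r' t ^ 2))) :
    (∀ t ∈ I,
      (1 - r' t ^ 2 - r t * r'' t) ^ 2
        = (ρ ^ 2 * r t ^ 2 - lam) * r t ^ 2 * (1 - r' t ^ 2)) ∧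
    ∃ μ : ℝ, ∀ t ∈ I,
      (ρ ^ 2 * r t ^ 2 - lam) ^ ((3 : ℝ) / 2) / ρ ^ 2 + μ = 3 * (r t * √(1 - r' t ^ 2)) := by
  have hκ_sq : ∀ t ∈ I, 0 ≤ ρ ^ 2 * r t ^ 2 - lam := fun t ht => sub_nonneg.2 (hge t ht)
  constructor
  · intro t ht
    rw [hode t ht, mul_pow, Real.sq_sqrt (mul_nonneg (hκ_sq t ht) (sub_pos.2 (hlt t ht)).le)]
    ring
  · have hκ : ∀ t ∈ I, 1 - r' t ^ 2 - r t * r'' t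
        = √(ρ ^ 2 * r t ^ 2 - lam) * (r t * √(1 - r' t ^ 2)) := fun t ht => by
      rw [hode t ht, Real.sqrt_mul (hκ_sq t ht), mul_left_comm]
    obtain ⟨c, hc⟩ := exists_add_const_eq_mul_sqrt_one_sub_sq hI.convex hr' hr'' hlt hκ
      fun t _ => hasDerivAt_rpow_three_halves_div hρ lam (r t)
    refine ⟨3 * c, fun t ht => ?_⟩
    rw [← hc t ht]
    field_simp

/-- if a positive `C²` function `r` on an interval `I`, with `r'² < 1`
and `ρ²r² ≥ λ`, satisfies `1 − r'² − r r'' = r √((ρ²r² − λ)(1 − r'²))`, then it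
satisfies the squared equation `(1 − r'² − r r'')² = (ρ²r² − λ) r² (1 − r'²)` and
there is a constant `μ` with `(ρ²r² − λ)^{3/2}/ρ² + μ = 3 r √(1 − r'²)` on `I`,
i.e. the latter expression is a first integral of the ODE. -/
theorem statement14 (ρ lam : ℝ) (hρ : 0 < ρ) (I : Set ℝ) (hI : I.OrdConnected)
    (r r' r'' : ℝ → ℝ)
    (hr' : ∀ t ∈ I, HasDerivAt r (r' t) t)
    (hr'' : ∀ t ∈ I, HasDerivAt r' (r'' t) t)
    (hr''c : ContinuousOn r'' I)
    (hpos : ∀ t ∈ I, 0 < r t)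
    (hlt : ∀ t ∈ I, r' t ^ 2 < 1)
    (hge : ∀ t ∈ I, lam ≤ ρ ^ 2 * r t ^ 2)
    (hode : ∀ t ∈ I,
      1 - r' t ^ 2 - r t * r'' t
        = r t * Real.sqrt ((ρ ^ 2 * r t ^ 2 - lam) * (1 - r' t ^ 2))) :
    (∀ t ∈ I,
      (1 - r' t ^ 2 - r t * r'' t) ^ 2
        = (ρ ^ 2 * r t ^ 2 - lam) * r t ^ 2 * (1 - r' t ^ 2)) ∧
    ∃ μ : ℝ, ∀ t ∈ I,
      (ρ ^ 2 * r t ^ 2 - lam) ^ ((3 : ℝ) / 2) / ρ ^ 2 + μ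
        = 3 * (r t * Real.sqrt (1 - r' t ^ 2)) :=
  statement14_general hρ.ne' hI (fun t ht => (hr' t ht).hasDerivWithinAt)
    (fun t ht => (hr'' t ht).hasDerivWithinAt) hlt hge hode
end

section
/- Let α : ℝ → ℂ\{0} and ω : ℝ → ℂ\{0} be regular C¹ curves that are periodic with periods T > 0 and S > 0 respectively, and suppose ∫₀^T Im( α'(x)·conj(α(x)) ) dx = 0 and ∫₀^S Im( ω'(y)·conj(ω(y)) ) dy = 0. Then the Lagrangian immersion Φ = α∗ω is doubly periodic: Φ(t + T, s) = Φ(t, s) = Φ(t, s + S) for all (t,s) ∈ ℝ² (hence Φ gives rise to a Lagrangian torus). -/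
open Complex

/-!
A periodic function has a periodic primitive as soon as its integral over one period vanishes. For
the integrand `γ' * conj γ` of a closed curve `γ` the real part is half the derivative of `‖γ‖ ^ 2`,
so its integral over a period is automatically zero, and the only obstruction to periodicity is the
integral of the imaginary part.
-/

open Function MeasureTheory
open scoped ComplexConjugate InnerProductSpace

theorem periodic_deriv {𝕜 F : Type*} [NontriviallyNormedField 𝕜] [NormedAddCommGroup F]
    [NormedSpace 𝕜 F] {f : 𝕜 → F} {c : 𝕜} (hf : Periodic f c) : Periodic (deriv f) c := fun x => by
  rw [← deriv_comp_add_const, hf.funext]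

theorem periodic_primitive_of_integral_eq_zero {E : Type*} [NormedAddCommGroup E] [NormedSpace ℝ E]
    {f : ℝ → E} {T : ℝ} (hf : Periodic f T) (hfi : IntervalIntegrable f volume 0 T)
    (hf0 : ∫ x in (0 : ℝ)..T, f x = 0) (a : ℝ) : Periodic (fun t => ∫ x in a..t, f x) T := by
  intro t
  rcases eq_or_ne T 0 with rfl | hT
  · simp only [add_zero]
  have integral_period : ∫ x in a..a + T, f x = 0 := by
    rw [hf.intervalIntegral_add_eq a 0, zero_add, hf0]
  simp only [hf.intervalIntegral_add_eq_add a t (hf.intervalIntegrable₀ hT hfi), integral_period,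
    add_zero]

theorem integral_inner_hasDerivAt_eq_half_norm_sq_sub {F : Type*} [NormedAddCommGroup F]
    [InnerProductSpace ℝ F] {f f' : ℝ → F} {a b : ℝ}
    (hf : ∀ x ∈ Set.uIcc a b, HasDerivAt f (f' x) x)
    (hfi : IntervalIntegrable (fun x => ⟪f x, f' x⟫_ℝ) volume a b) :
    ∫ x in a..b, ⟪f x, f' x⟫_ℝ = (‖f b‖ ^ 2 - ‖f a‖ ^ 2) / 2 := by
  have two_mul_integral : 2 * ∫ x in a..b, ⟪f x, f' x⟫_ℝ = ‖f b‖ ^ 2 - ‖f a‖ ^ 2 := by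
    rw [← intervalIntegral.integral_const_mul]
    exact intervalIntegral.integral_eq_sub_of_hasDerivAt (fun x hx => (hf x hx).norm_sq)
      (hfi.const_mul 2)
  linarith

section PlanarCurves

variable {γ : ℝ → ℂ} {a b T : ℝ}

theorem integral_deriv_mul_conj_eq_zero (hγ : ∀ x ∈ Set.uIcc a b, DifferentiableAt ℝ γ x)
    (hγi : IntervalIntegrable (fun x => deriv γ x * conj (γ x)) volume a b)
    (hclosed : γ a = γ b) (him : ∫ x in a..b, (deriv γ x * conj (γ x)).im = 0) :
    ∫ x in a..b, deriv γ x * conj (γ x) = 0 := by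
  have hinner : IntervalIntegrable (fun x => ⟪γ x, deriv γ x⟫_ℝ) volume a b := by
    simp only [Complex.inner]
    exact ⟨reCLM.integrable_comp hγi.1, reCLM.integrable_comp hγi.2⟩
  have hre : ∫ x in a..b, (deriv γ x * conj (γ x)).re = 0 := by
    simp only [← Complex.inner]
    rw [integral_inner_hasDerivAt_eq_half_norm_sq_sub (fun x hx => (hγ x hx).hasDerivAt) hinner,
      hclosed, sub_self, zero_div]
  apply Complex.ext
  · exact (reCLM.intervalIntegral_comp_comm hγi).symm.trans hre
  · exact (imCLM.intervalIntegral_comp_comm hγi).symm.trans him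

theorem periodic_integral_deriv_mul_conj (hγ : Differentiable ℝ γ) (hγp : Periodic γ T)
    (hγi : IntervalIntegrable (fun x => deriv γ x * conj (γ x)) volume 0 T)
    (him : ∫ x in (0 : ℝ)..T, (deriv γ x * conj (γ x)).im = 0) (a : ℝ) :
    Periodic (fun t => ∫ x in a..t, deriv γ x * conj (γ x)) T := by
  have integrand_periodic : Periodic (fun x => deriv γ x * conj (γ x)) T :=
    (periodic_deriv hγp).mul (hγp.comp conj)
  exact periodic_primitive_of_integral_eq_zero integrand_periodic hγi
    (integral_deriv_mul_conj_eq_zero (fun x _ => hγ x) hγi hγp.eq.symm him) a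

theorem intervalIntegrable_deriv_mul_conj (hγ : ContDiff ℝ 1 γ) (a b : ℝ) :
    IntervalIntegrable (fun x => deriv γ x * conj (γ x)) volume a b :=
  ((hγ.continuous_deriv le_rfl).mul (continuous_conj.comp hγ.continuous)).intervalIntegrable a b

end PlanarCurves

theorem statement18_general (α ω : ℝ → ℂ) (T S : ℝ)
    (hα : Differentiable ℝ α) (hω : Differentiable ℝ ω)
    (hαi : IntervalIntegrable (fun x => deriv α x * conj (α x)) volume 0 T)
    (hωi : IntervalIntegrable (fun y => deriv ω y * conj (ω y)) volume 0 S)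
    (hαp : Periodic α T) (hωp : Periodic ω S)
    (hαint : ∫ x in (0 : ℝ)..T, (deriv α x * conj (α x)).im = 0)
    (hωint : ∫ y in (0 : ℝ)..S, (deriv ω y * conj (ω y)).im = 0)
    (t₀ s₀ t s : ℝ) :
    starProd α ω t₀ s₀ (t + T) s = starProd α ω t₀ s₀ t s ∧
      starProd α ω t₀ s₀ t (s + S) = starProd α ω t₀ s₀ t s := by
  have hαprim := periodic_integral_deriv_mul_conj hα hαp hαi hαint t₀ t
  have hωprim := periodic_integral_deriv_mul_conj hω hωp hωi hωint s₀ s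
  constructor
  · simp only [starProd, hαprim, hαp t]
  · simp only [starProd, hωprim, hωp s]

/-- if `α`, `ω` are regular periodic planar curves avoiding the origin,
with periods `T`, `S`, such that `∫₀^T Im(α'·conj(α)) = 0 = ∫₀^S Im(ω'·conj(ω))`,
then `Φ = α ∗ ω` is doubly periodic: `Φ(t+T,s) = Φ(t,s) = Φ(t,s+S)` (hence gives a
Lagrangian torus). -/
theorem statement18 (α ω : ℝ → ℂ) (T S : ℝ) (hT : 0 < T) (hS : 0 < S)
    (hα : ContDiff ℝ 1 α) (hω : ContDiff ℝ 1 ω)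
    (hα0 : ∀ t, α t ≠ 0) (hω0 : ∀ s, ω s ≠ 0)
    (hαr : ∀ t, deriv α t ≠ 0) (hωr : ∀ s, deriv ω s ≠ 0)
    (hαp : Function.Periodic α T) (hωp : Function.Periodic ω S)
    (hαint : (∫ x in (0:ℝ)..T, (deriv α x * (starRingEnd ℂ) (α x)).im) = 0)
    (hωint : (∫ y in (0:ℝ)..S, (deriv ω y * (starRingEnd ℂ) (ω y)).im) = 0)
    (t₀ s₀ : ℝ) :
    ∀ t s : ℝ,
      starProd α ω t₀ s₀ (t + T) s = starProd α ω t₀ s₀ t s ∧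
      starProd α ω t₀ s₀ t (s + S) = starProd α ω t₀ s₀ t s := by
  exact statement18_general α ω T S (hα.differentiable one_ne_zero) (hω.differentiable one_ne_zero)
    (intervalIntegrable_deriv_mul_conj hα 0 T) (intervalIntegrable_deriv_mul_conj hω 0 S)
    hαp hωp hαint hωint t₀ s₀
end

section
/- Let α(t) = (1 + 2cos t) + i·(2 cos t sin t) (the Gerono lemniscate translated so as to avoid the origin) and ω(s) = sin s + i·sin(2s) (a Lissajous curve), both 2π-periodic. Then ∫₀^{2π} Im( α'(t)·conj(α(t)) ) dt = 0 and ∫₀^{2π} Im( ω'(s)·conj(ω(s)) ) ds = 0; consequently the map Φ = α∗ω (with base points t₀ = s₀ = 0) satisfies Φ(t + 2π, s) = Φ(t, s) = Φ(t, s + 2π) for all (t,s) ∈ ℝ², i.e. Φ is doubly periodic and defines a Lagrangian torus in ℂ². -/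
open Complex

/-- The translated Gerono lemniscate `α(t) = (1 + 2cos t) + i·(2 cos t sin t)`. -/
noncomputable def gerono (t : ℝ) : ℂ :=
  ((1 + 2 * Real.cos t : ℝ) : ℂ) + ((2 * Real.cos t * Real.sin t : ℝ) : ℂ) * Complex.I

/-- The Lissajous curve `ω(s) = sin s + i·sin (2s)`. -/
noncomputable def lissajous (s : ℝ) : ℂ :=
  ((Real.sin s : ℝ) : ℂ) + ((Real.sin (2 * s) : ℝ) : ℂ) * Complex.I

/-!
Both curves are centrally symmetric, the symmetry reversing the parameter:
`f (c - t) = 2 * p - f t`, with `c = π`, `p = 1` for the lemniscate and `c = 0`, `p = 0` for the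
Lissajous curve. Substituting `t ↦ c - t` in `J = ∫ f' * conj f` over a period gives
`J = 2 * conj p * ∫ f' - J = -J`, as the curve is closed. So `J = 0`: its imaginary part vanishes,
and the primitives of `f' * conj f`, the only possible obstruction to the periodicity of `Φ`, are
periodic.
-/

open Function MeasureTheory
open scoped ComplexConjugate

section NormedSpace

variable {E : Type*} [NormedAddCommGroup E] [NormedSpace ℝ E] {f : ℝ → E} {T : ℝ}

theorem periodic_deriv_s19 (hf : Periodic f T) : Periodic (deriv f) T := fun t => by
  rw [← deriv_comp_add_const, hf.funext]

theorem periodic_intervalIntegral (hf : Periodic f T)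
    (hint : ∀ a b, IntervalIntegrable f volume a b) (hzero : ∫ t in (0 : ℝ)..T, f t = 0) (a : ℝ) :
    Periodic (fun t => ∫ x in a..t, f x) T := fun t => by
  have hperiod : ∫ x in a..a + T, f x = 0 := by
    rw [hf.intervalIntegral_add_eq a 0, zero_add, hzero]
  simp only [hf.intervalIntegral_add_eq_add a t hint, hperiod, add_zero]

theorem integral_comp_const_sub_of_periodic (hf : Periodic f T) (c : ℝ) :
    ∫ t in (0 : ℝ)..T, f (c - t) = ∫ t in (0 : ℝ)..T, f t := by
  simpa using hf.intervalIntegral_add_eq (c - T) 0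

theorem integral_deriv_eq_zero_of_periodic [CompleteSpace E] (hf : Periodic f T)
    (hf' : ContDiff ℝ 1 f) : ∫ t in (0 : ℝ)..T, deriv f t = 0 := by
  rw [intervalIntegral.integral_deriv_eq_sub
    (fun t _ => (hf'.differentiable one_ne_zero).differentiableAt)
    ((hf'.continuous_deriv le_rfl).intervalIntegrable _ _), hf.eq, sub_self]

theorem deriv_const_sub_of_pointSymmetric {c : ℝ} {q : E} (hsymm : ∀ t, f (c - t) = q - f t)
    (t : ℝ) : deriv f (c - t) = deriv f t := by
  have h : deriv (fun t => f (c - t)) t = deriv (fun t => q - f t) t := by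
    rw [funext hsymm]
  rwa [deriv_comp_const_sub, deriv_const_sub, neg_inj] at h

end NormedSpace

section PlaneCurve

variable {f : ℝ → ℂ} {T : ℝ}

theorem contDiff_ofReal_add_ofReal_mul_I {x y : ℝ → ℝ} {n : WithTop ℕ∞} (hx : ContDiff ℝ n x)
    (hy : ContDiff ℝ n y) : ContDiff ℝ n fun t => (x t : ℂ) + (y t : ℂ) * I :=
  (ofRealCLM.contDiff.comp hx).add ((ofRealCLM.contDiff.comp hy).mul contDiff_const)

theorem periodic_deriv_mul_conj (hf : Periodic f T) :
    Periodic (fun t => deriv f t * conj (f t)) T :=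
  (periodic_deriv_s19 hf).mul (hf.comp conj)

theorem continuous_deriv_mul_conj (hf : ContDiff ℝ 1 f) :
    Continuous fun t => deriv f t * conj (f t) :=
  (hf.continuous_deriv le_rfl).mul (continuous_conj.comp hf.continuous)

theorem periodic_integral_deriv_mul_conj_s19 (hf : Periodic f T) (hf' : ContDiff ℝ 1 f)
    (hzero : ∫ t in (0 : ℝ)..T, deriv f t * conj (f t) = 0) (a : ℝ) :
    Periodic (fun t => ∫ x in a..t, deriv f x * conj (f x)) T :=
  periodic_intervalIntegral (periodic_deriv_mul_conj hf)
    (fun _ _ => (continuous_deriv_mul_conj hf').intervalIntegrable _ _) hzero a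

theorem integral_deriv_mul_conj_eq_zero_of_pointSymmetric (hf : Periodic f T)
    (hf' : ContDiff ℝ 1 f) {c : ℝ} {p : ℂ} (hsymm : ∀ t, f (c - t) = 2 * p - f t) :
    ∫ t in (0 : ℝ)..T, deriv f t * conj (f t) = 0 := by
  have hreflect (t : ℝ) : deriv f (c - t) * conj (f (c - t)) =
      deriv f t * (2 * conj p) - deriv f t * conj (f t) := by
    rw [deriv_const_sub_of_pointSymmetric hsymm, hsymm, map_sub, map_mul, map_ofNat, mul_sub]
  refine self_eq_neg.mp ?_
  calc ∫ t in (0 : ℝ)..T, deriv f t * conj (f t)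
      = ∫ t in (0 : ℝ)..T, deriv f (c - t) * conj (f (c - t)) :=
        (integral_comp_const_sub_of_periodic (periodic_deriv_mul_conj hf) c).symm
    _ = (∫ t in (0 : ℝ)..T, deriv f t) * (2 * conj p) -
          ∫ t in (0 : ℝ)..T, deriv f t * conj (f t) := by
        simp only [hreflect]
        rw [intervalIntegral.integral_sub
          (((hf'.continuous_deriv le_rfl).mul_const _).intervalIntegrable _ _)
          ((continuous_deriv_mul_conj hf').intervalIntegrable _ _),
          intervalIntegral.integral_mul_const]
    _ = -∫ t in (0 : ℝ)..T, deriv f t * conj (f t) := by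
        rw [integral_deriv_eq_zero_of_periodic hf hf', zero_mul, zero_sub]

theorem integral_im_deriv_mul_conj (hf : ContDiff ℝ 1 f) (a b : ℝ) :
    ∫ t in a..b, (deriv f t * conj (f t)).im = (∫ t in a..b, deriv f t * conj (f t)).im :=
  imCLM.intervalIntegral_comp_comm ((continuous_deriv_mul_conj hf).intervalIntegrable a b)

end PlaneCurve

section StarProd

variable {α ω : ℝ → ℂ} {T : ℝ}

theorem starProd_periodic_left (hα : Periodic α T) (hα' : ContDiff ℝ 1 α)
    (hzero : ∫ t in (0 : ℝ)..T, deriv α t * conj (α t) = 0) (t₀ s₀ s : ℝ) :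
    Periodic (fun t => starProd α ω t₀ s₀ t s) T := fun t => by
  simp only [starProd, hα t, periodic_integral_deriv_mul_conj_s19 hα hα' hzero t₀ t]

theorem starProd_periodic_right (hω : Periodic ω T) (hω' : ContDiff ℝ 1 ω)
    (hzero : ∫ s in (0 : ℝ)..T, deriv ω s * conj (ω s) = 0) (t₀ s₀ t : ℝ) :
    Periodic (starProd α ω t₀ s₀ t) T := fun s => by
  simp only [starProd, hω s, periodic_integral_deriv_mul_conj_s19 hω hω' hzero s₀ s]

end StarProd

theorem gerono_periodic : Periodic gerono (2 * Real.pi) := fun t => by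
  simp only [gerono, Real.cos_add_two_pi, Real.sin_add_two_pi]

theorem contDiff_gerono {n : WithTop ℕ∞} : ContDiff ℝ n gerono :=
  contDiff_ofReal_add_ofReal_mul_I (by fun_prop) (by fun_prop)

theorem gerono_pi_sub (t : ℝ) : gerono (Real.pi - t) = 2 * 1 - gerono t := by
  simp only [gerono, Real.cos_pi_sub, Real.sin_pi_sub]
  push_cast
  ring

theorem lissajous_periodic : Periodic lissajous (2 * Real.pi) := fun s => by
  simp only [lissajous, Real.sin_two_mul, Real.cos_add_two_pi, Real.sin_add_two_pi]

theorem contDiff_lissajous {n : WithTop ℕ∞} : ContDiff ℝ n lissajous :=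
  contDiff_ofReal_add_ofReal_mul_I (by fun_prop) (by fun_prop)

theorem lissajous_neg (s : ℝ) : lissajous (-s) = -lissajous s := by
  simp only [lissajous, mul_neg, Real.sin_neg]
  push_cast
  ring

theorem integral_deriv_gerono_mul_conj :
    ∫ t in (0 : ℝ)..(2 * Real.pi), deriv gerono t * conj (gerono t) = 0 :=
  integral_deriv_mul_conj_eq_zero_of_pointSymmetric gerono_periodic contDiff_gerono gerono_pi_sub

theorem integral_deriv_lissajous_mul_conj :
    ∫ s in (0 : ℝ)..(2 * Real.pi), deriv lissajous s * conj (lissajous s) = 0 :=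
  integral_deriv_mul_conj_eq_zero_of_pointSymmetric (c := 0) (p := 0) lissajous_periodic
    contDiff_lissajous fun s => by rw [zero_sub, lissajous_neg, mul_zero, zero_sub]

/-- for the Gerono lemniscate `α` and the Lissajous curve `ω` (both
`2π`-periodic), `∫₀^{2π} Im(α'·conj(α)) = 0 = ∫₀^{2π} Im(ω'·conj(ω))`; consequently
`Φ = α ∗ ω` (base points `t₀ = s₀ = 0`) is doubly periodic,
`Φ(t+2π,s) = Φ(t,s) = Φ(t,s+2π)`, and defines a Lagrangian torus in `ℂ²`. -/
theorem statement19 :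
    (∫ t in (0:ℝ)..(2 * Real.pi), (deriv gerono t * (starRingEnd ℂ) (gerono t)).im) = 0 ∧
    (∫ s in (0:ℝ)..(2 * Real.pi), (deriv lissajous s * (starRingEnd ℂ) (lissajous s)).im) = 0 ∧
    ∀ t s : ℝ,
      starProd gerono lissajous 0 0 (t + 2 * Real.pi) s = starProd gerono lissajous 0 0 t s ∧
      starProd gerono lissajous 0 0 t (s + 2 * Real.pi) = starProd gerono lissajous 0 0 t s := by
  refine ⟨?_, ?_, fun t s => ⟨?_, ?_⟩⟩
  · rw [integral_im_deriv_mul_conj contDiff_gerono, integral_deriv_gerono_mul_conj, zero_im]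
  · rw [integral_im_deriv_mul_conj contDiff_lissajous, integral_deriv_lissajous_mul_conj, zero_im]
  · exact starProd_periodic_left gerono_periodic contDiff_gerono
      integral_deriv_gerono_mul_conj 0 0 s t
  · exact starProd_periodic_right lissajous_periodic contDiff_lissajous
      integral_deriv_lissajous_mul_conj 0 0 t s
end
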